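/- Degenerate local limit theorem: in the stationary random conductance model on ℤ, if 1/c is integrable but ∫c̄ dμ = +∞, then for μ-a.e. ω: lim_{n→∞} √(2n)·P_0^ω[S_{2n}=0] = 0; while if c̄ is integrable but ∫(1/c)dμ = +∞, then for μ-a.e. ω: lim_{n→∞} √(2n)·P_0^ω[S_{2n}=0] = +∞. -/

import Mathlib

open MeasureTheory Filter
open scoped BigOperators ENNReal

/-- `cbar κ x = c(x−1,x) + c(x,x+1)`, where `κ x` denotes the conductance of
the edge `{x, x+1}` of `ℤ`. -/
noncomputable def cbar (κ : ℤ → ℝ) (x : ℤ) : ℝ := κ (x - 1) + κ x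

/-- One-step transition probabilities of the nearest-neighbour conductance walk. -/
noncomputable def step (κ : ℤ → ℝ) (x y : ℤ) : ℝ :=
  if y = x + 1 then κ x / cbar κ x
  else if y = x - 1 then κ (x - 1) / cbar κ x else 0

/-- `walk κ n x y = P_x[S_n = y]`, the `n`-step transition probabilities. -/
noncomputable def walk (κ : ℤ → ℝ) : ℕ → ℤ → ℤ → ℝ
  | 0, x, y => if y = x then 1 else 0
  | (n+1), x, y =>
      walk κ n x (y - 1) * step κ (y - 1) y + walk κ n x (y + 1) * step κ (y + 1) y

/-- The heat kernel `h_n(x) = P_0[S_n = x] / c̄(x)`. -/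
noncomputable def heatK (κ : ℤ → ℝ) (n : ℕ) (x : ℤ) : ℝ := walk κ n 0 x / cbar κ x

/-- The energy `‖h_n‖² = Σ_x h_n(x)² c̄(x)`. -/
noncomputable def energy (κ : ℤ → ℝ) (n : ℕ) : ℝ :=
  ∑' x : ℤ, (heatK κ n x) ^ 2 * cbar κ x

/-- The stationary environment of conductances seen from `ω`:
`c(x,x+1)(ω) = c(Tˣ ω)`. -/
noncomputable def envC {Ω : Type*} (T : Equiv.Perm Ω) (c : Ω → ℝ) (ω : Ω) : ℤ → ℝ :=
  fun x => c ((T ^ x) ω)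

/-!
By reversibility `P_0[S_{2n} = 0] = c̄(0) ‖h_n‖²`, so only the size of `√n ‖h_n‖²` matters.

*Upper bound.* The Dirichlet form of `g = h_m + h_{m+1}` is `‖h_m‖² - ‖h_{m+1}‖²`, so some
`m ∈ [n, 2n)` makes it at most `‖h_n‖² / n`. Let `R = ∑_{i<N} 1/κ(i)` be the resistance and
`V = ∑_{i<N} c̄(i)` the volume of `[0, N)`. By Cauchy–Schwarz `(g(i) - g(0))² ≤ R ‖h_n‖² / n` for
`i < N`, and since `g` has mass at most `2` this forces `‖h_n‖² ≤ g(0) ≤ 4/V + R/n`. For `N ≈ ε√n`,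
linear growth of `R` and superlinear growth of `V` give `limsup √n ‖h_n‖² = O(ε)`.

*Lower bound.* Let `P` be the transition operator. A potential `U ≥ 0` with `U(0) = 0` and
`P U ≤ U + 2` satisfies `E_0[U(S_n)] ≤ 2n`. If `U ≥ 4n` off `(-M, M)`, Markov's inequality gives
`P_0[|S_n| < M] ≥ 1/2`, and Cauchy–Schwarz bounds `‖h_n‖²` below by a quarter of the inverse of the
volume of `(-M, M)`. When the volume grows linearly and the resistance superlinearly, a natural `U`
grows faster than `M²`, and `M ≈ ε√n` is admissible for every `ε > 0`.

The linear and superlinear growth comes from Birkhoff's ergodic theorem, extended by truncation to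
nonnegative functions of infinite mean. It is proved by maximal functions: if `∫ f < 0`, the running
maxima `M_n` of the Birkhoff sums satisfy `M_{n+1} - M_n ∘ T = max f (-M_n ∘ T)`, whose integral is
nonnegative but would tend to `∫ f` if `M_n` diverged almost everywhere.
-/

section Birkhoff

variable {Ω : Type*} {T : Ω → Ω} {f : Ω → ℝ}

/-- The running maximum `max_{0 ≤ k ≤ n} S_k` of the Birkhoff sums
`S_k = f + f ∘ T + ⋯ + f ∘ T^(k-1)` that drives the proof of the maximal ergodic theorem. -/
noncomputable def birkhoffMax (T : Ω → Ω) (f : Ω → ℝ) : ℕ →o (Ω → ℝ) :=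
  partialSups (birkhoffSum T f)

lemma birkhoffMax_zero : birkhoffMax T f 0 = 0 := by
  simp [birkhoffMax]

lemma birkhoffMax_succ (n : ℕ) (x : Ω) :
    birkhoffMax T f (n + 1) x = max 0 (f x + birkhoffMax T f n (T x)) := by
  simp only [birkhoffMax, partialSups_add_one', Pi.partialSups_apply, ← partialSups_const_add]
  simp [Function.comp_def, birkhoffSum_succ']

lemma birkhoffMax_nonneg (n : ℕ) (x : Ω) : 0 ≤ birkhoffMax T f n x := by
  simpa [birkhoffMax_zero] using (birkhoffMax T f).monotone n.zero_le x

lemma bddAbove_range_birkhoffMax_iff {x : Ω} :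
    BddAbove (Set.range fun n => birkhoffMax T f n x) ↔
      BddAbove (Set.range fun n => birkhoffSum T f n x) := by
  simp only [birkhoffMax, Pi.partialSups_apply]
  exact bddAbove_range_partialSups

lemma bddAbove_range_birkhoffMax_comp_iff {x : Ω} :
    BddAbove (Set.range fun n => birkhoffMax T f n (T x)) ↔
      BddAbove (Set.range fun n => birkhoffMax T f n x) := by
  constructor
  · rintro ⟨b, hb⟩
    refine ⟨max 0 (f x + b), ?_⟩
    rintro _ ⟨n, rfl⟩
    refine ((birkhoffMax T f).monotone n.le_succ x).trans ?_
    simp only [Nat.succ_eq_add_one, birkhoffMax_succ]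
    gcongr
    exact hb ⟨n, rfl⟩
  · rintro ⟨b, hb⟩
    refine ⟨b - f x, ?_⟩
    rintro _ ⟨n, rfl⟩
    have h : birkhoffMax T f (n + 1) x ≤ b := hb ⟨n + 1, rfl⟩
    rw [birkhoffMax_succ] at h
    linarith [le_of_max_le_right h]

lemma birkhoffAverage_iterate (n : ℕ) (x : Ω) :
    birkhoffAverage ℝ T f n (T^[n] x) =
      2 * birkhoffAverage ℝ T f (2 * n) x - birkhoffAverage ℝ T f n x := by
  simp only [birkhoffAverage, two_mul n, birkhoffSum_add, smul_eq_mul]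
  push_cast
  field_simp
  ring

lemma monotone_birkhoffAverage (n : ℕ) (x : Ω) :
    Monotone fun f : Ω → ℝ => birkhoffAverage ℝ T f n x := fun f g hfg => by
  simp only [birkhoffAverage, birkhoffSum]
  gcongr
  exact hfg _

variable [MeasurableSpace Ω] {μ : Measure Ω}

lemma measurable_birkhoffMax (hT : Measurable T) (hf : Measurable f) (n : ℕ) :
    Measurable (birkhoffMax T f n) := by
  induction n with
  | zero => simpa only [birkhoffMax_zero] using measurable_zero
  | succ n ih =>
    rw [funext (birkhoffMax_succ n)]
    exact measurable_const.max (hf.add (ih.comp hT))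

lemma integrable_birkhoffMax (hT : MeasurePreserving T μ μ) (hf : Integrable f μ) (n : ℕ) :
    Integrable (birkhoffMax T f n) μ := by
  induction n with
  | zero => simpa only [birkhoffMax_zero] using integrable_zero Ω ℝ μ
  | succ n ih =>
    rw [funext (birkhoffMax_succ n)]
    exact (integrable_zero Ω ℝ μ).sup (hf.add (hT.integrable_comp_of_integrable ih))

lemma integral_max_neg_birkhoffMax_nonneg (hT : MeasurePreserving T μ μ)
    (hf : Integrable f μ) (n : ℕ) :
    0 ≤ ∫ x, max (f x) (-birkhoffMax T f n (T x)) ∂μ := by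
  have hM := integrable_birkhoffMax hT hf
  have increment (x : Ω) : max (f x) (-birkhoffMax T f n (T x)) =
      birkhoffMax T f (n + 1) x - birkhoffMax T f n (T x) := by
    rw [birkhoffMax_succ, ← max_sub_sub_right, zero_sub, add_sub_cancel_right, max_comm]
  calc 0 ≤ ∫ x, birkhoffMax T f (n + 1) x ∂μ - ∫ x, birkhoffMax T f n x ∂μ :=
        sub_nonneg.2 (integral_mono (hM n) (hM (n + 1)) ((birkhoffMax T f).monotone n.le_succ))
    _ = ∫ x, birkhoffMax T f (n + 1) x ∂μ - ∫ x, birkhoffMax T f n (T x) ∂μ := by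
        rw [← integral_map hT.aemeasurable (by simpa only [hT.map_eq] using (hM n).1),
          hT.map_eq]
    _ = ∫ x, max (f x) (-birkhoffMax T f n (T x)) ∂μ := by
        simp_rw [increment]
        exact (integral_sub (hM _) (hT.integrable_comp_of_integrable (hM n))).symm

lemma tendsto_integral_max_neg_birkhoffMax (hT : Measurable T) (hf : Measurable f)
    (hfi : Integrable f μ)
    (hunbdd : ∀ᵐ x ∂μ, ¬ BddAbove (Set.range fun n => birkhoffMax T f n (T x))) :
    Tendsto (fun n => ∫ x, max (f x) (-birkhoffMax T f n (T x)) ∂μ) atTop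
      (nhds (∫ x, f x ∂μ)) := by
  refine tendsto_integral_of_dominated_convergence (fun x => |f x|) (fun n => ?_) hfi.abs
    (fun n => ae_of_all _ fun x => ?_) ?_
  · exact (hf.max ((measurable_birkhoffMax hT hf n).comp hT).neg).aestronglyMeasurable
  · have := birkhoffMax_nonneg (T := T) (f := f) n (T x)
    exact abs_le.2 ⟨le_max_of_le_left (neg_abs_le _),
      max_le (le_abs_self _) (by linarith [abs_nonneg (f x)])⟩
  · filter_upwards [hunbdd] with x hx
    have diverges : Tendsto (fun n => birkhoffMax T f n (T x)) atTop atTop :=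
      tendsto_atTop_atTop_of_monotone' (fun m n h => (birkhoffMax T f).monotone h (T x)) hx
    refine tendsto_const_nhds.congr' ?_
    filter_upwards [diverges.eventually_ge_atTop (-f x)] with n hn
    rw [max_eq_left (by linarith)]

theorem ae_bddAbove_range_birkhoffSum_of_integral_neg (hT : Ergodic T μ) (hf : Measurable f)
    (hfi : Integrable f μ) (hneg : ∫ x, f x ∂μ < 0) :
    ∀ᵐ x ∂μ, BddAbove (Set.range fun n => birkhoffSum T f n x) := by
  simp only [← bddAbove_range_birkhoffMax_iff]
  have measurableSet_bdd : MeasurableSet {x | BddAbove (Set.range fun n => birkhoffMax T f n x)} :=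
    measurableSet_bddAbove_range (measurable_birkhoffMax hT.measurable hf)
  rcases hT.toPreErgodic.ae_mem_or_ae_notMem measurableSet_bdd
    (Set.ext fun x => bddAbove_range_birkhoffMax_comp_iff) with bdd | unbdd
  · exact bdd
  · have lim := tendsto_integral_max_neg_birkhoffMax hT.measurable hf hfi
      (unbdd.mono fun x hx => bddAbove_range_birkhoffMax_comp_iff.not.2 hx)
    have := ge_of_tendsto' lim (integral_max_neg_birkhoffMax_nonneg hT.toMeasurePreserving hfi)
    linarith

variable [IsProbabilityMeasure μ]

lemma ae_eventually_birkhoffAverage_lt (hT : Ergodic T μ) (hf : Measurable f)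
    (hfi : Integrable f μ) {a : ℝ} (ha : ∫ x, f x ∂μ < a) :
    ∀ᵐ x ∂μ, ∀ᶠ n in atTop, birkhoffAverage ℝ T f n x < a := by
  obtain ⟨b, hb, hba⟩ := exists_between ha
  have hneg : ∫ x, f x - b ∂μ < 0 := by
    simpa [integral_sub hfi (integrable_const b)] using hb
  filter_upwards [ae_bddAbove_range_birkhoffSum_of_integral_neg hT (hf.sub_const b)
    (hfi.sub (integrable_const b)) hneg] with x ⟨D, hD⟩
  have remainder : Tendsto (fun n : ℕ => D / n) atTop (nhds 0) :=
    tendsto_const_div_atTop_nhds_zero_nat D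
  filter_upwards [remainder.eventually_lt_const (sub_pos.2 hba), eventually_gt_atTop 0]
    with n hn hn0
  have hS : birkhoffSum T (fun x => f x - b) n x ≤ D := hD ⟨n, rfl⟩
  simp only [birkhoffSum, Finset.sum_sub_distrib, Finset.sum_const, Finset.card_range,
    nsmul_eq_mul] at hS
  have hn0' : (0 : ℝ) < n := by exact_mod_cast hn0
  rw [div_lt_iff₀ hn0'] at hn
  rw [birkhoffAverage, birkhoffSum, smul_eq_mul, inv_mul_lt_iff₀ hn0']
  linarith

theorem ae_tendsto_birkhoffAverage (hT : Ergodic T μ) (hf : Integrable f μ) :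
    ∀ᵐ x ∂μ, Tendsto (birkhoffAverage ℝ T f · x) atTop (nhds (∫ x, f x ∂μ)) := by
  wlog hfm : Measurable f generalizing f
  · have hae := hf.1.ae_eq_mk
    have := this (hf.congr hae) hf.1.stronglyMeasurable_mk.measurable
    filter_upwards [this, ae_all_iff.2 fun n =>
      hT.quasiMeasurePreserving.birkhoffAverage_ae_eq_of_ae_eq ℝ hae n] with x hx hfx
    simpa only [hfx, integral_congr_ae hae] using hx
  have above (q : ℚ) : ∀ᵐ x ∂μ, ∫ x, f x ∂μ < q →
      ∀ᶠ n in atTop, birkhoffAverage ℝ T f n x < q := by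
    by_cases hq : ∫ x, f x ∂μ < q
    · simpa [hq] using ae_eventually_birkhoffAverage_lt hT hfm hf hq
    · simp [hq]
  have below (q : ℚ) : ∀ᵐ x ∂μ, q < ∫ x, f x ∂μ →
      ∀ᶠ n in atTop, q < birkhoffAverage ℝ T f n x := by
    by_cases hq : q < ∫ x, f x ∂μ
    · simpa [hq, birkhoffAverage_neg] using ae_eventually_birkhoffAverage_lt hT hfm.neg hf.neg
        (a := -q) (by simpa [integral_neg] using hq)
    · simp [hq]
  filter_upwards [ae_all_iff.2 above, ae_all_iff.2 below] with x habove hbelow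
  refine tendsto_order.2 ⟨fun a ha => ?_, fun a ha => ?_⟩
  · obtain ⟨q, haq, hq⟩ := exists_rat_btwn ha
    exact (hbelow q hq).mono fun n hn => haq.trans hn
  · obtain ⟨q, hq, hqa⟩ := exists_rat_btwn ha
    exact (habove q hq).mono fun n hn => hn.trans hqa

theorem ae_tendsto_birkhoffAverage_iterate (hT : Ergodic T μ) (hf : Integrable f μ) :
    ∀ᵐ x ∂μ, Tendsto (fun n => birkhoffAverage ℝ T f n (T^[n] x)) atTop
      (nhds (∫ x, f x ∂μ)) := by
  filter_upwards [ae_tendsto_birkhoffAverage hT hf] with x hx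
  have even : Tendsto (fun n => birkhoffAverage ℝ T f (2 * n) x) atTop (nhds (∫ x, f x ∂μ)) :=
    hx.comp (tendsto_id.const_mul_atTop' two_pos)
  simpa only [birkhoffAverage_iterate, two_mul (∫ x, f x ∂μ), add_sub_cancel_right] using
    (even.const_mul 2).sub hx

end Birkhoff

section Truncation

variable {Ω : Type*} [MeasurableSpace Ω] {μ : Measure Ω} {f : Ω → ℝ}

lemma integrable_min_const [IsFiniteMeasure μ] (hf : Measurable f) (hf0 : ∀ x, 0 ≤ f x)
    {K : ℝ} (hK : 0 ≤ K) : Integrable (fun x => min (f x) K) μ :=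
  .of_bound (hf.min measurable_const).aestronglyMeasurable K <| ae_of_all _ fun x => by
    rw [Real.norm_of_nonneg (le_min (hf0 x) hK)]
    exact min_le_right _ _

lemma tendsto_integral_min_atTop [IsFiniteMeasure μ] (hf : Measurable f) (hf0 : ∀ x, 0 ≤ f x)
    (hinf : ∫⁻ x, ENNReal.ofReal (f x) ∂μ = ⊤) :
    Tendsto (fun K : ℕ => ∫ x, min (f x) K ∂μ) atTop atTop := by
  rw [← ENNReal.tendsto_ofReal_nhds_top, ← hinf]
  simp_rw [fun K : ℕ => ofReal_integral_eq_lintegral_ofReal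
    (integrable_min_const (μ := μ) hf hf0 K.cast_nonneg)
    (ae_of_all _ fun x => le_min (hf0 x) K.cast_nonneg)]
  refine lintegral_tendsto_of_tendsto_of_monotone
    (fun K => (hf.min measurable_const).ennreal_ofReal.aemeasurable)
    (ae_of_all _ fun x K L hKL => by dsimp only; gcongr)
    (ae_of_all _ fun x => tendsto_const_nhds.congr' ?_)
  filter_upwards [eventually_ge_atTop ⌈f x⌉₊] with K hK
  rw [min_eq_left (Nat.ceil_le.1 hK)]

theorem ae_tendsto_atTop_of_lintegral_eq_top [IsFiniteMeasure μ] {F : (Ω → ℝ) → ℕ → Ω → ℝ}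
    (hF : ∀ n x, Monotone fun g => F g n x)
    (hconv : ∀ g, Integrable g μ → ∀ᵐ x ∂μ, Tendsto (F g · x) atTop (nhds (∫ x, g x ∂μ)))
    (hf : Measurable f) (hf0 : ∀ x, 0 ≤ f x) (hinf : ∫⁻ x, ENNReal.ofReal (f x) ∂μ = ⊤) :
    ∀ᵐ x ∂μ, Tendsto (F f · x) atTop atTop := by
  have truncated (K : ℕ) := hconv _ (integrable_min_const hf hf0 K.cast_nonneg)
  filter_upwards [ae_all_iff.2 truncated] with x hx
  refine tendsto_atTop.2 fun b => ?_
  obtain ⟨K, hK⟩ := ((tendsto_integral_min_atTop hf hf0 hinf).eventually_gt_atTop b).exists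
  filter_upwards [(hx K).eventually_const_lt hK] with n hn
  exact hn.le.trans (hF n x fun y => min_le_left _ _)

end Truncation

section InfiniteMean

variable {Ω : Type*} [MeasurableSpace Ω] {μ : Measure Ω} [IsProbabilityMeasure μ]
  {T : Ω → Ω} {f : Ω → ℝ}

lemma ae_tendsto_birkhoffAverage_atTop (hT : Ergodic T μ) (hf : Measurable f)
    (hf0 : ∀ x, 0 ≤ f x) (hinf : ∫⁻ x, ENNReal.ofReal (f x) ∂μ = ⊤) :
    ∀ᵐ x ∂μ, Tendsto (birkhoffAverage ℝ T f · x) atTop atTop :=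
  ae_tendsto_atTop_of_lintegral_eq_top monotone_birkhoffAverage
    (fun _ => ae_tendsto_birkhoffAverage hT) hf hf0 hinf

lemma ae_tendsto_birkhoffAverage_iterate_atTop (hT : Ergodic T μ) (hf : Measurable f)
    (hf0 : ∀ x, 0 ≤ f x) (hinf : ∫⁻ x, ENNReal.ofReal (f x) ∂μ = ⊤) :
    ∀ᵐ x ∂μ, Tendsto (fun n => birkhoffAverage ℝ T f n (T^[n] x)) atTop atTop :=
  ae_tendsto_atTop_of_lintegral_eq_top (F := fun f n x => birkhoffAverage ℝ T f n (T^[n] x))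
    (fun n x => monotone_birkhoffAverage n (T^[n] x))
    (fun _ => ae_tendsto_birkhoffAverage_iterate hT) hf hf0 hinf

end InfiniteMean

section Transition

variable {κ : ℤ → ℝ} {f g : ℤ → ℝ}

lemma cbar_pos (hκ : ∀ x, 0 < κ x) (x : ℤ) : 0 < cbar κ x :=
  add_pos (hκ _) (hκ _)

/-- The transition operator `(P f) x = E_x[f(S_1)]` of the conductance walk. -/
noncomputable def transition (κ : ℤ → ℝ) : Module.End ℝ (ℤ → ℝ) where
  toFun f x := (κ (x - 1) * f (x - 1) + κ x * f (x + 1)) / cbar κ x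
  map_add' f g := by ext x; simp only [Pi.add_apply]; ring
  map_smul' a f := by ext x; simp only [Pi.smul_apply, smul_eq_mul, RingHom.id_apply]; ring

lemma transition_apply (κ f : ℤ → ℝ) (x : ℤ) :
    transition κ f x = (κ (x - 1) * f (x - 1) + κ x * f (x + 1)) / cbar κ x :=
  rfl

lemma transition_mul_cbar (hκ : ∀ x, 0 < κ x) (f : ℤ → ℝ) (x : ℤ) :
    transition κ f x * cbar κ x = κ (x - 1) * f (x - 1) + κ x * f (x + 1) :=
  div_mul_cancel₀ _ (cbar_pos hκ x).ne'

lemma transition_one (hκ : ∀ x, 0 < κ x) : transition κ 1 = 1 := by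
  ext x
  simp only [transition_apply, Pi.one_apply, mul_one]
  exact div_self (cbar_pos hκ x).ne'

lemma transition_pow_one (hκ : ∀ x, 0 < κ x) (n : ℕ) : (transition κ ^ n) 1 = 1 := by
  induction n with
  | zero => rfl
  | succ n ih => rw [pow_succ', Module.End.mul_apply, ih, transition_one hκ]

lemma monotone_transition (hκ : ∀ x, 0 < κ x) : Monotone (transition κ) := fun f g hfg x => by
  have := cbar_pos hκ x
  have := (hκ x).le
  have := (hκ (x - 1)).le
  rw [transition_apply, transition_apply]
  gcongr <;> apply hfg

lemma monotone_transition_pow (hκ : ∀ x, 0 < κ x) (n : ℕ) : Monotone (transition κ ^ n) := by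
  rw [Module.End.coe_pow]
  exact (monotone_transition hκ).iterate n

lemma hasFiniteSupport_transition (hf : f.HasFiniteSupport) :
    (transition κ f).HasFiniteSupport := by
  have shift (a : ℤ) : (fun x => f (x + a)).HasFiniteSupport :=
    hf.fun_comp_of_injective (add_left_injective a)
  exact (((shift (-1)).mul_right fun x => κ (x - 1)).add ((shift 1).mul_right κ)).mul_left
    fun x => (cbar κ x)⁻¹

lemma heatK_succ (κ : ℤ → ℝ) (n : ℕ) : heatK κ (n + 1) = transition κ (heatK κ n) := by
  ext x
  have : x ≠ x + 1 + 1 := by omega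
  simp only [heatK, walk, step, transition_apply, sub_add_cancel, add_sub_cancel_right, if_true,
    this, if_false]
  ring

lemma heatK_eq_transition_pow (κ : ℤ → ℝ) (n : ℕ) :
    heatK κ n = (transition κ ^ n) (heatK κ 0) := by
  induction n with
  | zero => rfl
  | succ n ih => rw [heatK_succ, ih, pow_succ', Module.End.mul_apply]

lemma hasFiniteSupport_heatK (κ : ℤ → ℝ) (n : ℕ) : (heatK κ n).HasFiniteSupport := by
  induction n with
  | zero =>
    refine (Set.finite_singleton (0 : ℤ)).subset fun x hx => ?_
    by_contra h
    simp_all [heatK, walk]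
  | succ n ih => exact heatK_succ κ n ▸ hasFiniteSupport_transition ih

lemma heatK_nonneg (hκ : ∀ x, 0 < κ x) (n : ℕ) : 0 ≤ heatK κ n := by
  have initial : 0 ≤ heatK κ 0 := fun x => by
    have := cbar_pos hκ x
    simp only [heatK, walk, Pi.zero_apply]
    positivity
  rw [heatK_eq_transition_pow, ← map_zero (transition κ ^ n)]
  exact monotone_transition_pow hκ n initial

lemma walk_zero_zero_eq (hκ : ∀ x, 0 < κ x) (n : ℕ) :
    walk κ n 0 0 = cbar κ 0 * heatK κ n 0 :=
  (mul_div_cancel₀ _ (cbar_pos hκ 0).ne').symm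

end Transition

section DirichletForm

variable {κ : ℤ → ℝ} {f g : ℤ → ℝ}

/-- The pairing `⟨f, g⟩ = Σ_x f(x) g(x) c̄(x)` of `ℓ²(c̄)`, for which the walk is reversible. It is
only meaningful when the sum converges, for instance if `f` or `g` is finitely supported. -/
noncomputable def weightedPairing (κ f g : ℤ → ℝ) : ℝ :=
  ∑' x, f x * g x * cbar κ x

/-- The Dirichlet form `Σ_x κ(x) ∇f(x) ∇g(x)` of the conductance walk, with `∇f(x) = f(x+1) - f(x)`;
as for `weightedPairing`, one of the functions should be finitely supported. -/
noncomputable def dirichletForm (κ f g : ℤ → ℝ) : ℝ :=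
  ∑' x, (f (x + 1) - f x) * (κ x * (g (x + 1) - g x))

lemma summable_weightedPairing (hf : f.HasFiniteSupport) (κ g : ℤ → ℝ) :
    Summable fun x => f x * g x * cbar κ x :=
  summable_of_hasFiniteSupport ((hf.mul_left g).mul_left (cbar κ))

lemma weightedPairing_comm (κ f g : ℤ → ℝ) : weightedPairing κ f g = weightedPairing κ g f := by
  simp only [weightedPairing, mul_comm (f _)]

lemma dirichletForm_comm (κ f g : ℤ → ℝ) : dirichletForm κ f g = dirichletForm κ g f := by
  simp only [dirichletForm]
  exact tsum_congr fun x => by ring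

lemma weightedPairing_add_right (hf : f.HasFiniteSupport) (κ g₁ g₂ : ℤ → ℝ) :
    weightedPairing κ f (g₁ + g₂) = weightedPairing κ f g₁ + weightedPairing κ f g₂ := by
  simp only [weightedPairing, Pi.add_apply, mul_add, add_mul]
  exact (summable_weightedPairing hf κ g₁).tsum_add (summable_weightedPairing hf κ g₂)

lemma weightedPairing_add_left {f₁ f₂ : ℤ → ℝ} (hf₁ : f₁.HasFiniteSupport)
    (hf₂ : f₂.HasFiniteSupport) (κ g : ℤ → ℝ) :
    weightedPairing κ (f₁ + f₂) g = weightedPairing κ f₁ g + weightedPairing κ f₂ g := by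
  simp only [weightedPairing, Pi.add_apply, add_mul]
  exact (summable_weightedPairing hf₁ κ g).tsum_add (summable_weightedPairing hf₂ κ g)

lemma dirichletForm_eq_weightedPairing_of_summable (hκ : ∀ x, 0 < κ x)
    (hf : Summable fun x => f x * (κ x * (g (x + 1) - g x)))
    (hf' : Summable fun x => f (x + 1) * (κ x * (g (x + 1) - g x))) :
    dirichletForm κ f g = weightedPairing κ f (g - transition κ g) := by
  set J : ℤ → ℝ := fun x => κ x * (g (x + 1) - g x) with hJ
  have shift : ∑' x, f (x + 1) * J x = ∑' x, f x * J (x - 1) := by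
    simpa using (Equiv.addRight (1 : ℤ)).tsum_eq fun x => f x * J (x - 1)
  have hf'' : Summable fun x => f x * J (x - 1) := by
    rw [← (Equiv.addRight (1 : ℤ)).summable_iff]
    simpa [Function.comp_def] using hf'
  have divergence (x : ℤ) : (g - transition κ g) x * cbar κ x = J (x - 1) - J x := by
    rw [Pi.sub_apply, sub_mul, transition_mul_cbar hκ, cbar, hJ]
    simp only [sub_add_cancel]
    ring
  calc dirichletForm κ f g = ∑' x, (f (x + 1) * J x - f x * J x) :=
        tsum_congr fun x => sub_mul _ _ _
    _ = ∑' x, (f x * J (x - 1) - f x * J x) := by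
        rw [hf'.tsum_sub hf, shift, hf''.tsum_sub hf]
    _ = weightedPairing κ f (g - transition κ g) :=
        tsum_congr fun x => by rw [mul_assoc, divergence, mul_sub]

lemma dirichletForm_eq_weightedPairing_left (hκ : ∀ x, 0 < κ x) (hf : f.HasFiniteSupport)
    (g : ℤ → ℝ) : dirichletForm κ f g = weightedPairing κ f (g - transition κ g) :=
  dirichletForm_eq_weightedPairing_of_summable hκ (summable_of_hasFiniteSupport (hf.mul_left _))
    (summable_of_hasFiniteSupport
      ((hf.fun_comp_of_injective (add_left_injective 1)).mul_left _))

lemma dirichletForm_eq_weightedPairing_right (hκ : ∀ x, 0 < κ x) (f : ℤ → ℝ)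
    (hg : g.HasFiniteSupport) : dirichletForm κ f g = weightedPairing κ f (g - transition κ g) := by
  have flux : (fun x => κ x * (g (x + 1) - g x)).HasFiniteSupport :=
    ((hg.fun_comp_of_injective (add_left_injective 1)).sub hg).mul_right κ
  exact dirichletForm_eq_weightedPairing_of_summable hκ
    (summable_of_hasFiniteSupport (flux.mul_right _))
    (summable_of_hasFiniteSupport (flux.mul_right _))

theorem weightedPairing_transition_left (hκ : ∀ x, 0 < κ x) (hf : f.HasFiniteSupport)
    (g : ℤ → ℝ) :
    weightedPairing κ (transition κ f) g = weightedPairing κ f (transition κ g) := by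
  have h : weightedPairing κ (f - transition κ f) g = weightedPairing κ f (g - transition κ g) := by
    rw [weightedPairing_comm, ← dirichletForm_eq_weightedPairing_right hκ g hf,
      dirichletForm_comm, dirichletForm_eq_weightedPairing_left hκ hf]
  have hPf := hasFiniteSupport_transition (κ := κ) hf
  have hleft := weightedPairing_add_left (hf.sub hPf) hPf κ g
  have hright := weightedPairing_add_right hf κ (g - transition κ g) (transition κ g)
  rw [sub_add_cancel] at hleft hright
  linarith

lemma weightedPairing_transition_pow_left (hκ : ∀ x, 0 < κ x) (n : ℕ) :
    ∀ {f : ℤ → ℝ}, f.HasFiniteSupport → ∀ g,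
      weightedPairing κ ((transition κ ^ n) f) g = weightedPairing κ f ((transition κ ^ n) g) := by
  induction n with
  | zero => exact fun _ _ => rfl
  | succ n ih =>
    intro f hf g
    rw [pow_succ, Module.End.mul_apply, ih (hasFiniteSupport_transition hf),
      weightedPairing_transition_left hκ hf, ← Module.End.mul_apply, ← pow_succ', pow_succ]

end DirichletForm

section HeatKernel

variable {κ : ℤ → ℝ}

lemma weightedPairing_heatK_zero (hκ : ∀ x, 0 < κ x) (f : ℤ → ℝ) :
    weightedPairing κ (heatK κ 0) f = f 0 := by
  rw [weightedPairing, tsum_eq_single 0 fun x hx => by simp [heatK, walk, hx]]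
  have := (cbar_pos hκ 0).ne'
  simp only [heatK, walk, if_true]
  field_simp

/-- Both sides are `E_0[f(S_n)]`. -/
theorem weightedPairing_heatK (hκ : ∀ x, 0 < κ x) (n : ℕ) (f : ℤ → ℝ) :
    weightedPairing κ (heatK κ n) f = (transition κ ^ n) f 0 := by
  rw [heatK_eq_transition_pow, weightedPairing_transition_pow_left hκ n
    (hasFiniteSupport_heatK κ 0), weightedPairing_heatK_zero hκ]

lemma weightedPairing_heatK_heatK (hκ : ∀ x, 0 < κ x) (m n : ℕ) :
    weightedPairing κ (heatK κ m) (heatK κ n) = heatK κ (m + n) 0 := by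
  rw [weightedPairing_heatK hκ, heatK_eq_transition_pow κ n, heatK_eq_transition_pow κ (m + n),
    pow_add, Module.End.mul_apply]

lemma energy_eq_heatK (hκ : ∀ x, 0 < κ x) (n : ℕ) : energy κ n = heatK κ (2 * n) 0 := by
  rw [two_mul, ← weightedPairing_heatK_heatK hκ]
  simp only [energy, weightedPairing, sq]

end HeatKernel

section ReturnProbability

variable {κ : ℤ → ℝ}

lemma sum_heatK_mul_cbar (hκ : ∀ x, 0 < κ x) (n : ℕ) (s : Finset ℤ) :
    ∑ x ∈ s, heatK κ n x * cbar κ x = (transition κ ^ n) (Set.indicator s 1) 0 := by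
  rw [← weightedPairing_heatK hκ, weightedPairing, tsum_eq_sum (s := s) fun x hx => by simp [hx]]
  exact Finset.sum_congr rfl fun x hx => by simp [hx]

lemma sum_heatK_mul_cbar_le_one (hκ : ∀ x, 0 < κ x) (n : ℕ) (s : Finset ℤ) :
    ∑ x ∈ s, heatK κ n x * cbar κ x ≤ 1 := by
  rw [sum_heatK_mul_cbar hκ]
  have := monotone_transition_pow hκ n (Set.indicator_le_self' (s := (s : Set ℤ)) (f := 1)
    fun x _ => zero_le_one) 0
  rwa [transition_pow_one hκ] at this

lemma heatK_eq_zero_of_odd (κ : ℤ → ℝ) {n : ℕ} {x : ℤ} (h : Odd (n + x)) : heatK κ n x = 0 := by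
  induction n generalizing x with
  | zero =>
    have : x ≠ 0 := by rintro rfl; simp at h
    simp [heatK, walk, this]
  | succ n ih =>
    have hleft : Odd (n + (x - 1)) := by push_cast at h; grind
    have hright : Odd (n + (x + 1)) := by push_cast at h; grind
    simp [heatK_succ, transition_apply, ih hleft, ih hright]

/-- The sum of two consecutive heat kernels. Unlike a single `heatK κ n`, which vanishes on every
other site, it varies slowly in space. -/
noncomputable def smoothHeatK (κ : ℤ → ℝ) (n : ℕ) : ℤ → ℝ :=
  heatK κ n + heatK κ (n + 1)

lemma hasFiniteSupport_smoothHeatK (κ : ℤ → ℝ) (n : ℕ) : (smoothHeatK κ n).HasFiniteSupport :=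
  (hasFiniteSupport_heatK κ n).add (hasFiniteSupport_heatK κ (n + 1))

lemma sum_smoothHeatK_mul_cbar_le (hκ : ∀ x, 0 < κ x) (n : ℕ) (s : Finset ℤ) :
    ∑ x ∈ s, smoothHeatK κ n x * cbar κ x ≤ 2 := by
  simp only [smoothHeatK, Pi.add_apply, add_mul, Finset.sum_add_distrib]
  linarith [sum_heatK_mul_cbar_le_one hκ n s, sum_heatK_mul_cbar_le_one hκ (n + 1) s]

theorem dirichletForm_smoothHeatK (hκ : ∀ x, 0 < κ x) (n : ℕ) :
    dirichletForm κ (smoothHeatK κ n) (smoothHeatK κ n) = energy κ n - energy κ (n + 1) := by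
  have odd_return (k : ℕ) (hk : Odd k) : heatK κ k 0 = 0 :=
    heatK_eq_zero_of_odd κ (by simpa using hk)
  have increment : smoothHeatK κ n - transition κ (smoothHeatK κ n) =
      heatK κ n - heatK κ (n + 2) := by
    rw [smoothHeatK, map_add, ← heatK_succ, ← heatK_succ]
    abel
  have pairing (k : ℕ) : weightedPairing κ (heatK κ k) (heatK κ n - heatK κ (n + 2)) =
      heatK κ (k + n) 0 - heatK κ (k + (n + 2)) 0 := by
    rw [weightedPairing_heatK hκ, map_sub, Pi.sub_apply, ← weightedPairing_heatK hκ,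
      ← weightedPairing_heatK hκ, weightedPairing_heatK_heatK hκ, weightedPairing_heatK_heatK hκ]
  rw [dirichletForm_eq_weightedPairing_left hκ (hasFiniteSupport_smoothHeatK κ n), increment,
    smoothHeatK, weightedPairing_add_left (hasFiniteSupport_heatK κ _) (hasFiniteSupport_heatK κ _),
    pairing, pairing, odd_return (n + 1 + n) (by grind), odd_return (n + 1 + (n + 2)) (by grind),
    energy_eq_heatK hκ, energy_eq_heatK hκ, sub_self, add_zero, ← two_mul]
  congr 2
  omega

lemma energy_nonneg (hκ : ∀ x, 0 < κ x) (n : ℕ) : 0 ≤ energy κ n :=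
  tsum_nonneg fun x => mul_nonneg (sq_nonneg _) (cbar_pos hκ x).le

lemma antitone_energy (hκ : ∀ x, 0 < κ x) : Antitone (energy κ) :=
  antitone_nat_of_succ_le fun n => by
    rw [← sub_nonneg, ← dirichletForm_smoothHeatK hκ]
    refine tsum_nonneg fun x => ?_
    nlinarith [mul_nonneg (hκ x).le (sq_nonneg (smoothHeatK κ n (x + 1) - smoothHeatK κ n x))]

lemma energy_le_smoothHeatK (hκ : ∀ x, 0 < κ x) {m n : ℕ} (h : m < 2 * n) :
    energy κ n ≤ smoothHeatK κ m 0 := by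
  have hm := heatK_nonneg hκ m 0
  have hm' := heatK_nonneg hκ (m + 1) 0
  rw [Pi.zero_apply] at hm hm'
  rw [smoothHeatK, Pi.add_apply]
  obtain ⟨k, rfl | rfl⟩ := m.even_or_odd'
  · have := antitone_energy hκ (show k ≤ n by omega)
    rw [energy_eq_heatK hκ k] at this
    linarith
  · have := antitone_energy hκ (show k + 1 ≤ n by omega)
    rw [energy_eq_heatK hκ (k + 1), mul_add_one] at this
    linarith

end ReturnProbability

section UpperBound

variable {κ : ℤ → ℝ}

lemma exists_sub_succ_le_div {a : ℕ → ℝ} (ha : ∀ k, 0 ≤ a k) {n : ℕ} (hn : n ≠ 0) :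
    ∃ m ∈ Finset.Ico n (2 * n), a m - a (m + 1) ≤ a n / n := by
  refine Finset.exists_le_of_sum_le (Finset.nonempty_Ico.2 (by omega)) ?_
  have telescope : ∑ m ∈ Finset.Ico n (2 * n), (a m - a (m + 1)) = a n - a (2 * n) := by
    rw [← neg_sub (a (2 * n)), ← Finset.sum_Ico_sub a (by omega), ← Finset.sum_neg_distrib]
    simp only [neg_sub]
  have total : ∑ _m ∈ Finset.Ico n (2 * n), a n / n = a n := by
    rw [Finset.sum_const, Nat.card_Ico, show 2 * n - n = n by omega, nsmul_eq_mul,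
      mul_div_cancel₀ _ (by exact_mod_cast hn)]
  linarith [ha (2 * n)]

lemma sq_sub_le_mul_dirichletForm (hκ : ∀ x, 0 < κ x) {g : ℤ → ℝ} (hg : g.HasFiniteSupport)
    (n : ℕ) : (g n - g 0) ^ 2 ≤ (∑ i ∈ Finset.range n, 1 / κ i) * dirichletForm κ g g := by
  have energy_density_nonneg (x : ℤ) : 0 ≤ (g (x + 1) - g x) * (κ x * (g (x + 1) - g x)) := by
    nlinarith [mul_nonneg (hκ x).le (sq_nonneg (g (x + 1) - g x))]
  have telescope : ∑ i ∈ Finset.range n, (g ((i : ℤ) + 1) - g i) = g n - g 0 := by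
    simpa using Finset.sum_range_sub (fun i : ℕ => g i) n
  have summable_density : Summable fun x => (g (x + 1) - g x) * (κ x * (g (x + 1) - g x)) :=
    summable_of_hasFiniteSupport
      (((hg.fun_comp_of_injective (add_left_injective 1)).sub hg).mul_left _)
  have partial_sum : ∑ i ∈ Finset.range n, (g ((i : ℤ) + 1) - g i) * (κ i * (g (i + 1) - g i)) ≤
      dirichletForm κ g g := by
    simpa [dirichletForm] using summable_density.sum_le_tsum
      ((Finset.range n).map Nat.castEmbedding) fun x _ => energy_density_nonneg x
  rw [← telescope]
  refine (Finset.sum_sq_le_sum_mul_sum_of_sq_le_mul (Finset.range n)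
    (g := fun i => (g ((i : ℤ) + 1) - g i) * (κ i * (g (i + 1) - g i)))
    (fun i _ => one_div_nonneg.2 (hκ i).le)
    (fun i _ => energy_density_nonneg i) fun i _ => ?_).trans
    (mul_le_mul_of_nonneg_left partial_sum
      (Finset.sum_nonneg fun i _ => one_div_nonneg.2 (hκ i).le))
  have := (hκ i).ne'
  field_simp
  rfl

lemma half_sub_le_of_sq_sub_le_mul {a b r : ℝ} (ha : 0 ≤ a) (hr : 0 ≤ r)
    (h : (b - a) ^ 2 ≤ r * a) : (a - r) / 2 ≤ b := by
  have amgm : r * a ≤ ((a + r) / 2) ^ 2 := by nlinarith [sq_nonneg (a - r)]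
  linarith [(abs_le_of_sq_le_sq' (h.trans amgm) (by positivity)).1]

theorem energy_le (hκ : ∀ x, 0 < κ x) {n N : ℕ} (hn : n ≠ 0) (hN : N ≠ 0) :
    energy κ n ≤ 4 / (∑ i ∈ Finset.range N, cbar κ i) + (∑ i ∈ Finset.range N, 1 / κ i) / n := by
  set R := ∑ i ∈ Finset.range N, 1 / κ i
  set V := ∑ i ∈ Finset.range N, cbar κ i
  have hR : 0 ≤ R := Finset.sum_nonneg fun i _ => one_div_nonneg.2 (hκ i).le
  have hV : 0 < V := Finset.sum_pos (fun i _ => cbar_pos hκ i) (by simpa using hN)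
  obtain ⟨m, hm, dissipation⟩ := exists_sub_succ_le_div (energy_nonneg hκ) hn
  set g := smoothHeatK κ m
  have hg0 : energy κ n ≤ g 0 := energy_le_smoothHeatK hκ (Finset.mem_Ico.1 hm).2
  have spread (i : ℕ) (hi : i ∈ Finset.range N) : (g 0 - R / n) / 2 ≤ g i := by
    refine half_sub_le_of_sq_sub_le_mul ((energy_nonneg hκ n).trans hg0) (by positivity) ?_
    calc (g i - g 0) ^ 2
        ≤ (∑ j ∈ Finset.range i, 1 / κ j) * dirichletForm κ g g :=
          sq_sub_le_mul_dirichletForm hκ (hasFiniteSupport_smoothHeatK κ m) i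
      _ ≤ R * (energy κ n / n) := by
          rw [dirichletForm_smoothHeatK hκ]
          have := sub_nonneg.2 (antitone_energy hκ m.le_succ)
          gcongr
          exact Finset.sum_le_sum_of_subset_of_nonneg
            (Finset.range_mono (Finset.mem_range.1 hi).le) fun j _ _ => one_div_nonneg.2 (hκ j).le
      _ ≤ R / n * g 0 := by
          rw [mul_div_left_comm, mul_comm]
          gcongr
  have mass : (g 0 - R / n) / 2 * V ≤ 2 := by
    calc (g 0 - R / n) / 2 * V ≤ ∑ i ∈ Finset.range N, g i * cbar κ i := by
          rw [Finset.mul_sum]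
          exact Finset.sum_le_sum fun i hi =>
            mul_le_mul_of_nonneg_right (spread i hi) (cbar_pos hκ i).le
      _ ≤ 2 := by
          simpa using sum_smoothHeatK_mul_cbar_le hκ m ((Finset.range N).map Nat.castEmbedding)
  have := (le_div_iff₀ hV).2 mass
  have : 4 / V = 2 * (2 / V) := by ring
  linarith

end UpperBound

section Scaling

variable {κ : ℤ → ℝ}

lemma tendsto_sqrt_natCast_atTop : Tendsto (fun n : ℕ => Real.sqrt n) atTop atTop :=
  Real.tendsto_sqrt_atTop.comp tendsto_natCast_atTop_atTop

lemma tendsto_ceil_mul_sqrt_atTop {ε : ℝ} (hε : 0 < ε) :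
    Tendsto (fun n : ℕ => ⌈ε * Real.sqrt n⌉₊) atTop atTop :=
  tendsto_nat_ceil_atTop.comp (tendsto_sqrt_natCast_atTop.const_mul_atTop hε)

lemma tendsto_ceil_mul_sqrt_div_sqrt {ε : ℝ} (hε : 0 < ε) :
    Tendsto (fun n : ℕ => (⌈ε * Real.sqrt n⌉₊ : ℝ) / Real.sqrt n) atTop (nhds ε) :=
  (tendsto_nat_ceil_mul_div_atTop hε.le).comp tendsto_sqrt_natCast_atTop

lemma sqrt_two_mul_mul_walk (hκ : ∀ x, 0 < κ x) (n : ℕ) :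
    Real.sqrt (2 * n) * walk κ (2 * n) 0 0 =
      Real.sqrt 2 * cbar κ 0 * (Real.sqrt n * energy κ n) := by
  rw [walk_zero_zero_eq hκ, energy_eq_heatK hκ, Real.sqrt_mul zero_le_two]
  ring

lemma sqrt_mul_energy_le (hκ : ∀ x, 0 < κ x) {n N : ℕ} (hn : n ≠ 0) (hN : N ≠ 0) :
    Real.sqrt n * energy κ n ≤
      4 / ((∑ i ∈ Finset.range N, cbar κ i) / N * (N / Real.sqrt n)) +
        (∑ i ∈ Finset.range N, 1 / κ i) / N * (N / Real.sqrt n) := by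
  have : 0 < Real.sqrt n := Real.sqrt_pos.2 (by positivity)
  have : (0 : ℝ) < N := by positivity
  calc Real.sqrt n * energy κ n
      ≤ Real.sqrt n * (4 / (∑ i ∈ Finset.range N, cbar κ i) +
          (∑ i ∈ Finset.range N, 1 / κ i) / Real.sqrt n ^ 2) := by
        rw [Real.sq_sqrt n.cast_nonneg]
        gcongr
        exact energy_le hκ hn hN
    _ = _ := by field_simp

theorem tendsto_sqrt_mul_walk_zero (hκ : ∀ x, 0 < κ x)
    (hvolume : Tendsto (fun N : ℕ => (∑ i ∈ Finset.range N, cbar κ i) / N) atTop atTop)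
    (hresistance : IsBoundedUnder (· ≤ ·) atTop
      fun N : ℕ => (∑ i ∈ Finset.range N, 1 / κ i) / N) :
    Tendsto (fun n : ℕ => Real.sqrt (2 * n) * walk κ (2 * n) 0 0) atTop (nhds 0) := by
  suffices h : Tendsto (fun n : ℕ => Real.sqrt n * energy κ n) atTop (nhds 0) by
    simpa only [sqrt_two_mul_mul_walk hκ, mul_zero] using h.const_mul (Real.sqrt 2 * cbar κ 0)
  obtain ⟨C, hC⟩ := hresistance
  refine tendsto_order.2 ⟨fun b hb => Eventually.of_forall fun n =>
    hb.trans_le (mul_nonneg (Real.sqrt_nonneg _) (energy_nonneg hκ n)), fun η hη => ?_⟩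
  obtain ⟨ε, hε, hCε⟩ := exists_pos_mul_lt hη C
  set N : ℕ → ℕ := fun n => ⌈ε * Real.sqrt n⌉₊
  have hN : Tendsto N atTop atTop := tendsto_ceil_mul_sqrt_atTop hε
  have ratio := tendsto_ceil_mul_sqrt_div_sqrt hε
  have limit := ((hvolume.comp hN).atTop_mul_pos hε ratio).const_div_atTop 4 |>.add
    (ratio.const_mul C)
  rw [zero_add] at limit
  filter_upwards [limit.eventually_lt_const hCε, hN.eventually (eventually_map.1 hC),
    eventually_ne_atTop 0, hN.eventually_ne_atTop 0] with n hlt hres hn hNn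
  refine (sqrt_mul_energy_le hκ hn hNn).trans_lt (lt_of_le_of_lt ?_ hlt)
  exact add_le_add_right (mul_le_mul_of_nonneg_right hres (by positivity)) _

end Scaling

section Reflection

variable {κ : ℤ → ℝ}

/-- The conductances seen after the reflection `x ↦ -x` of `ℤ`, which carries the edge `{x, x + 1}`
to `{-1 - x, -x}`. -/
def reflect (κ : ℤ → ℝ) (x : ℤ) : ℝ := κ (-1 - x)

lemma cbar_reflect (κ : ℤ → ℝ) (x : ℤ) : cbar (reflect κ) x = cbar κ (-x) := by
  simp only [cbar, reflect, show -1 - (x - 1) = -x by ring, show -1 - x = -x - 1 by ring]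
  exact add_comm _ _

lemma transition_comp_neg (κ f : ℤ → ℝ) :
    transition κ (fun x => f (-x)) = fun x => transition (reflect κ) f (-x) := by
  ext x
  simp only [transition_apply, cbar_reflect, neg_neg, reflect, show -1 - (-x - 1) = x by ring,
    show -1 - -x = x - 1 by ring, show -(x - 1) = -x + 1 by ring, show -(x + 1) = -x - 1 by ring]
  ring

lemma transition_pow_comp_neg (κ f : ℤ → ℝ) (n : ℕ) :
    (transition κ ^ n) (fun x => f (-x)) = fun x => (transition (reflect κ) ^ n) f (-x) := by
  induction n with
  | zero => rfl
  | succ n ih => rw [pow_succ', Module.End.mul_apply, ih, transition_comp_neg, pow_succ',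
      Module.End.mul_apply]

end Reflection

section Potential

variable {κ : ℤ → ℝ}

/-- The potential that vanishes on `(-∞, 0]` and equals, at `x > 0`, the expected time to reach `x`
from `0` for the walk that holds at `0` instead of stepping to `-1`. It solves `P W = W + 1` on
`[0, ∞)`. -/
noncomputable def rightPotential (κ : ℤ → ℝ) (x : ℤ) : ℝ :=
  ∑ j ∈ Finset.range x.toNat, (∑ i ∈ Finset.range (j + 1), cbar κ i) / κ j

lemma rightPotential_term_nonneg (hκ : ∀ x, 0 < κ x) (j : ℕ) :
    0 ≤ (∑ i ∈ Finset.range (j + 1), cbar κ i) / κ j :=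
  div_nonneg (Finset.sum_nonneg fun i _ => (cbar_pos hκ i).le) (hκ j).le

lemma rightPotential_nonneg (hκ : ∀ x, 0 < κ x) : 0 ≤ rightPotential κ := fun _ =>
  Finset.sum_nonneg fun j _ => rightPotential_term_nonneg hκ j

lemma monotone_rightPotential (hκ : ∀ x, 0 < κ x) : Monotone (rightPotential κ) := fun _ _ hxy =>
  Finset.sum_le_sum_of_subset_of_nonneg (Finset.range_mono (Int.toNat_le_toNat hxy))
    fun j _ _ => rightPotential_term_nonneg hκ j

lemma mul_rightPotential_sub (hκ : ∀ x, 0 < κ x) (x : ℤ) :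
    κ x * (rightPotential κ (x + 1) - rightPotential κ x) =
      ∑ i ∈ Finset.range (x + 1).toNat, cbar κ i := by
  rcases lt_or_ge x 0 with hx | hx
  · simp [rightPotential, show x.toNat = 0 by omega, show (x + 1).toNat = 0 by omega]
  · lift x to ℕ using hx
    have htoNat : ((x : ℤ) + 1).toNat = x + 1 := by omega
    rw [rightPotential, rightPotential, htoNat, Int.toNat_natCast, Finset.sum_range_succ,
      add_sub_cancel_left, mul_div_cancel₀ _ (hκ x).ne']

theorem transition_rightPotential_le (hκ : ∀ x, 0 < κ x) :
    transition κ (rightPotential κ) ≤ rightPotential κ + 1 := fun x => by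
  have hx := cbar_pos hκ x
  have outflow := mul_rightPotential_sub hκ x
  have inflow := mul_rightPotential_sub hκ (x - 1)
  rw [sub_add_cancel] at inflow
  have divergence : ∑ i ∈ Finset.range (x + 1).toNat, cbar κ i ≤
      ∑ i ∈ Finset.range x.toNat, cbar κ i + cbar κ x := by
    rcases lt_or_ge x 0 with hx0 | hx0
    · simpa [show x.toNat = 0 by omega, show (x + 1).toNat = 0 by omega] using hx.le
    · lift x to ℕ using hx0
      rw [show ((x : ℤ) + 1).toNat = x + 1 by omega, Int.toNat_natCast, Finset.sum_range_succ]
  refine le_of_mul_le_mul_right ?_ hx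
  rw [transition_mul_cbar hκ, Pi.add_apply, Pi.one_apply]
  simp only [cbar] at *
  linarith

lemma transition_pow_le_add_natCast (hκ : ∀ x, 0 < κ x) {f : ℤ → ℝ} (hf : transition κ f ≤ f + 1)
    (n : ℕ) : (transition κ ^ n) f ≤ f + (n : ℤ → ℝ) := by
  induction n with
  | zero => simp
  | succ n ih =>
    calc (transition κ ^ (n + 1)) f = (transition κ ^ n) (transition κ f) := by
          rw [pow_succ, Module.End.mul_apply]
      _ ≤ (transition κ ^ n) (f + 1) := monotone_transition_pow hκ n hf
      _ = (transition κ ^ n) f + 1 := by rw [map_add, transition_pow_one hκ]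
      _ ≤ f + (n : ℤ → ℝ) + 1 := by gcongr
      _ = f + ((n + 1 : ℕ) : ℤ → ℝ) := by rw [Nat.cast_succ, add_assoc]

lemma transition_pow_rightPotential_zero_le (hκ : ∀ x, 0 < κ x) (n : ℕ) :
    (transition κ ^ n) (rightPotential κ) 0 ≤ n := by
  simpa [rightPotential] using
    transition_pow_le_add_natCast hκ (transition_rightPotential_le hκ) n 0

/-- The two-sided potential, the sum of `rightPotential` and its mirror image. It satisfies
`P U ≤ U + 2` and is large far from `0`, so that it confines the walk. -/
noncomputable def potential (κ : ℤ → ℝ) : ℤ → ℝ :=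
  rightPotential κ + fun x => rightPotential (reflect κ) (-x)

lemma potential_nonneg (hκ : ∀ x, 0 < κ x) : 0 ≤ potential κ :=
  add_nonneg (rightPotential_nonneg hκ) fun x => rightPotential_nonneg (fun _ => hκ _) (-x)

lemma transition_pow_potential_zero_le (hκ : ∀ x, 0 < κ x) (n : ℕ) :
    (transition κ ^ n) (potential κ) 0 ≤ 2 * n := by
  rw [potential, map_add, transition_pow_comp_neg, two_mul, Pi.add_apply, neg_zero]
  exact add_le_add (transition_pow_rightPotential_zero_le hκ n)
    (transition_pow_rightPotential_zero_le (fun _ => hκ _) n)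

lemma le_potential_of_notMem_Ioo (hκ : ∀ x, 0 < κ x) {A : ℝ} {M : ℕ}
    (hright : A ≤ rightPotential κ M) (hleft : A ≤ rightPotential (reflect κ) M) {x : ℤ}
    (hx : x ∉ Finset.Ioo (-M : ℤ) M) : A ≤ potential κ x := by
  have hκ' : ∀ x, 0 < reflect κ x := fun _ => hκ _
  rw [potential, Pi.add_apply]
  rcases lt_or_ge x M with hxM | hxM
  · have hneg : (M : ℤ) ≤ -x := by
      simp only [Finset.mem_Ioo, not_and, not_lt] at hx
      omega
    exact (hleft.trans (monotone_rightPotential hκ' hneg)).trans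
      (le_add_of_nonneg_left (rightPotential_nonneg hκ x))
  · exact (hright.trans (monotone_rightPotential hκ hxM)).trans
      (le_add_of_nonneg_right (rightPotential_nonneg hκ' (-x)))

lemma mul_le_rightPotential (hκ : ∀ x, 0 < κ x) (m n : ℕ) :
    (∑ i ∈ Finset.range m, cbar κ i) * ∑ i ∈ Finset.range n, 1 / κ (m + i) ≤
      rightPotential κ (m + n : ℕ) := by
  rw [rightPotential, Int.toNat_natCast, Finset.sum_range_add, Finset.mul_sum]
  refine (Finset.sum_le_sum fun i _ => ?_).trans
    (le_add_of_nonneg_left (Finset.sum_nonneg fun j _ => rightPotential_term_nonneg hκ j))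
  have := (hκ (m + i)).le
  rw [mul_one_div, Nat.cast_add]
  gcongr
  · exact fun j _ _ => (cbar_pos hκ j).le
  · omega

lemma tendsto_rightPotential_div_sq_atTop (hκ : ∀ x, 0 < κ x) {v : ℝ} (hv : 0 < v)
    (hvolume : Tendsto (fun N : ℕ => (∑ i ∈ Finset.range N, cbar κ i) / N) atTop (nhds v))
    (hresistance : Tendsto (fun N : ℕ => (∑ i ∈ Finset.range N, 1 / κ (N + i)) / N) atTop atTop) :
    Tendsto (fun N : ℕ => rightPotential κ (2 * N : ℕ) / (N : ℝ) ^ 2) atTop atTop := by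
  refine tendsto_atTop_mono (fun N => ?_) (hvolume.pos_mul_atTop hv hresistance)
  rw [div_mul_div_comm, ← sq, two_mul]
  gcongr
  exact mul_le_rightPotential hκ N N

end Potential

section LowerBound

variable {κ : ℤ → ℝ}

lemma mul_one_sub_sum_heatK_le (hκ : ∀ x, 0 < κ x) (n : ℕ) {f : ℤ → ℝ} (hf : 0 ≤ f) {A : ℝ}
    {s : Finset ℤ} (hA : ∀ x ∉ s, A ≤ f x) :
    A * (1 - ∑ x ∈ s, heatK κ n x * cbar κ x) ≤ (transition κ ^ n) f 0 := by
  have hAf : A • (1 - Set.indicator s 1) ≤ f := fun x => by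
    by_cases hx : x ∈ s
    · simpa [hx] using hf x
    · simpa [hx] using hA x hx
  have := monotone_transition_pow hκ n hAf 0
  rwa [map_smul, map_sub, transition_pow_one hκ, Pi.smul_apply, Pi.sub_apply,
    ← sum_heatK_mul_cbar hκ] at this

lemma sq_sum_heatK_le (hκ : ∀ x, 0 < κ x) (n : ℕ) (s : Finset ℤ) :
    (∑ x ∈ s, heatK κ n x * cbar κ x) ^ 2 ≤ energy κ n * ∑ x ∈ s, cbar κ x := by
  have summable_energy : Summable fun x => heatK κ n x ^ 2 * cbar κ x := by
    simpa only [sq] using summable_weightedPairing (hasFiniteSupport_heatK κ n) κ (heatK κ n)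
  have density_nonneg (x : ℤ) : 0 ≤ heatK κ n x ^ 2 * cbar κ x :=
    mul_nonneg (sq_nonneg _) (cbar_pos hκ x).le
  refine (Finset.sum_sq_le_sum_mul_sum_of_sq_le_mul s (fun x _ => density_nonneg x)
    (fun x _ => (cbar_pos hκ x).le) fun x _ => le_of_eq (by ring)).trans ?_
  gcongr
  · exact Finset.sum_nonneg fun x _ => (cbar_pos hκ x).le
  · exact summable_energy.sum_le_tsum s fun x _ => density_nonneg x

lemma sum_Ioo_cbar_le (hκ : ∀ x, 0 < κ x) (M : ℕ) :
    ∑ x ∈ Finset.Ioo (-M : ℤ) M, cbar κ x ≤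
      ∑ i ∈ Finset.range M, cbar κ i + ∑ i ∈ Finset.range M, cbar (reflect κ) i := by
  set right := (Finset.range M).image fun i : ℕ => (i : ℤ)
  set left := (Finset.range M).image fun i : ℕ => -(i : ℤ)
  have cover : Finset.Ioo (-M : ℤ) M ⊆ right ∪ left := fun x hx => by
    rw [Finset.mem_Ioo] at hx
    simp only [right, left, Finset.mem_union, Finset.mem_image, Finset.mem_range]
    rcases le_total 0 x with hx0 | hx0
    · exact .inl ⟨x.toNat, by omega, by omega⟩
    · exact .inr ⟨(-x).toNat, by omega, by omega⟩
  calc ∑ x ∈ Finset.Ioo (-M : ℤ) M, cbar κ x ≤ ∑ x ∈ right ∪ left, cbar κ x :=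
        Finset.sum_le_sum_of_subset_of_nonneg cover fun x _ _ => (cbar_pos hκ x).le
    _ ≤ ∑ x ∈ right, cbar κ x + ∑ x ∈ left, cbar κ x := by
        rw [← Finset.sum_union_inter]
        exact le_add_of_nonneg_right (Finset.sum_nonneg fun x _ => (cbar_pos hκ x).le)
    _ = _ := by
        simp only [right, left, cbar_reflect]
        rw [Finset.sum_image (by simp), Finset.sum_image (by simp)]

theorem one_le_four_mul_energy_mul_sum (hκ : ∀ x, 0 < κ x) {n M : ℕ} (hn : n ≠ 0)
    (hright : 4 * n ≤ rightPotential κ M) (hleft : 4 * n ≤ rightPotential (reflect κ) M) :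
    1 ≤ 4 * energy κ n *
      (∑ i ∈ Finset.range M, cbar κ i + ∑ i ∈ Finset.range M, cbar (reflect κ) i) := by
  set p := ∑ x ∈ Finset.Ioo (-M : ℤ) M, heatK κ n x * cbar κ x
  have markov : 4 * n * (1 - p) ≤ 2 * n :=
    (mul_one_sub_sum_heatK_le hκ n (potential_nonneg hκ) fun x =>
      le_potential_of_notMem_Ioo hκ hright hleft).trans (transition_pow_potential_zero_le hκ n)
  have half_le : 1 / 2 ≤ p := by
    have hn' : (0 : ℝ) < n := by positivity
    nlinarith
  have cauchy_schwarz := (sq_sum_heatK_le hκ n _).trans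
    (mul_le_mul_of_nonneg_left (sum_Ioo_cbar_le hκ M) (energy_nonneg hκ n))
  nlinarith

lemma eventually_four_mul_le_ceil_mul_sqrt {W : ℕ → ℝ}
    (hW : Tendsto (fun N : ℕ => W N / (N : ℝ) ^ 2) atTop atTop) {ε : ℝ} (hε : 0 < ε) :
    ∀ᶠ n : ℕ in atTop, 4 * n ≤ W ⌈ε * Real.sqrt n⌉₊ := by
  have hN := tendsto_ceil_mul_sqrt_atTop hε
  filter_upwards [(hW.comp hN).eventually_ge_atTop (4 / ε ^ 2), hN.eventually_ne_atTop 0]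
    with n hWn hNn
  rw [Function.comp_apply, le_div_iff₀ (by positivity)] at hWn
  refine le_trans ?_ hWn
  calc (4 * n : ℝ) = 4 / ε ^ 2 * (ε * Real.sqrt n) ^ 2 := by
        rw [mul_pow, Real.sq_sqrt n.cast_nonneg]
        field_simp
    _ ≤ 4 / ε ^ 2 * (⌈ε * Real.sqrt n⌉₊ : ℝ) ^ 2 := by
        gcongr
        exact Nat.le_ceil _

theorem tendsto_sqrt_mul_walk_atTop (hκ : ∀ x, 0 < κ x)
    (hvolume : IsBoundedUnder (· ≤ ·) atTop
      fun N : ℕ => (∑ i ∈ Finset.range N, cbar κ i) / N)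
    (hvolume' : IsBoundedUnder (· ≤ ·) atTop
      fun N : ℕ => (∑ i ∈ Finset.range N, cbar (reflect κ) i) / N)
    (hpotential : Tendsto (fun N : ℕ => rightPotential κ (2 * N : ℕ) / (N : ℝ) ^ 2) atTop atTop)
    (hpotential' : Tendsto (fun N : ℕ => rightPotential (reflect κ) (2 * N : ℕ) / (N : ℝ) ^ 2)
      atTop atTop) :
    Tendsto (fun n : ℕ => Real.sqrt (2 * n) * walk κ (2 * n) 0 0) atTop atTop := by
  suffices h : Tendsto (fun n : ℕ => Real.sqrt n * energy κ n) atTop atTop by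
    simpa only [sqrt_two_mul_mul_walk hκ] using
      h.const_mul_atTop (mul_pos (Real.sqrt_pos.2 two_pos) (cbar_pos hκ 0))
  obtain ⟨C, hC⟩ := isBoundedUnder_le_add hvolume hvolume'
  refine tendsto_atTop.2 fun b => ?_
  obtain ⟨ε, hε, hCε⟩ := exists_pos_mul_lt zero_lt_one (8 * C * b)
  set N : ℕ → ℕ := fun n => ⌈ε * Real.sqrt n⌉₊
  have hN : Tendsto N atTop atTop := tendsto_ceil_mul_sqrt_atTop hε
  have hN2 : Tendsto (fun n => 2 * N n) atTop atTop := hN.const_mul_atTop' two_pos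
  filter_upwards [eventually_four_mul_le_ceil_mul_sqrt hpotential hε,
    eventually_four_mul_le_ceil_mul_sqrt hpotential' hε, hN2.eventually (eventually_map.1 hC),
    ((tendsto_ceil_mul_sqrt_div_sqrt hε).const_mul (8 * C * b)).eventually_lt_const hCε,
    eventually_ne_atTop 0, hN.eventually_ne_atTop 0] with n hright hleft hvol hratio hn hNn
  have hs : 0 < Real.sqrt n := Real.sqrt_pos.2 (by positivity)
  have hE := energy_nonneg hκ n
  rw [Pi.add_apply, ← add_div, div_le_iff₀ (by positivity)] at hvol
  rw [← mul_div_assoc, div_lt_one hs] at hratio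
  have lower : 1 ≤ 8 * C * N n * energy κ n := by
    push_cast at hvol
    nlinarith [one_le_four_mul_energy_mul_sum hκ hn hright hleft]
  have hCN : 0 < 8 * C * N n := pos_of_mul_pos_left (zero_lt_one.trans_le lower) hE
  refine le_of_mul_le_mul_left ?_ hCN
  calc 8 * C * N n * b ≤ Real.sqrt n * 1 := by linarith
    _ ≤ Real.sqrt n * (8 * C * N n * energy κ n) := by gcongr
    _ = _ := by ring

end LowerBound

section Environment

variable {Ω : Type*} (T : Equiv.Perm Ω) (c : Ω → ℝ) (ω : Ω)

lemma envC_natCast (n : ℕ) : envC T c ω n = c (T^[n] ω) := by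
  rw [envC, zpow_natCast, Equiv.Perm.iterate_eq_pow]

lemma cbar_envC_natCast (n : ℕ) :
    cbar (envC T c ω) n = c (T.symm (T^[n] ω)) + c (T^[n] ω) := by
  rw [cbar, envC_natCast, envC, sub_eq_neg_add, zpow_add, zpow_neg_one, zpow_natCast,
    Equiv.Perm.iterate_eq_pow]
  rfl

lemma reflect_envC : reflect (envC T c ω) = envC T.symm c (T.symm ω) := by
  ext x
  rw [reflect, envC, envC, sub_eq_neg_add, zpow_add, zpow_neg, zpow_neg_one, ← inv_zpow]
  rfl

lemma sum_cbar_envC_div (N : ℕ) :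
    (∑ i ∈ Finset.range N, cbar (envC T c ω) i) / N =
      birkhoffAverage ℝ T (fun ω => c (T.symm ω) + c ω) N ω := by
  simp only [cbar_envC_natCast, birkhoffAverage, birkhoffSum, smul_eq_mul, div_eq_inv_mul]

lemma sum_one_div_envC_div (N : ℕ) :
    (∑ i ∈ Finset.range N, 1 / envC T c ω i) / N =
      birkhoffAverage ℝ T (fun ω => 1 / c ω) N ω := by
  simp only [envC_natCast, birkhoffAverage, birkhoffSum, smul_eq_mul, div_eq_inv_mul]

lemma sum_one_div_envC_add_div (N : ℕ) :
    (∑ i ∈ Finset.range N, 1 / envC T c ω (N + i)) / N =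
      birkhoffAverage ℝ T (fun ω => 1 / c ω) N (T^[N] ω) := by
  simp only [← Nat.cast_add, envC_natCast, birkhoffAverage, birkhoffSum, smul_eq_mul,
    div_eq_inv_mul, ← Function.iterate_add_apply, add_comm N]

end Environment

section Ergodic

variable {Ω : Type*} [MeasurableSpace Ω] {μ : Measure Ω} [IsProbabilityMeasure μ]
  {T : Equiv.Perm Ω} {c : Ω → ℝ}

theorem ae_tendsto_sqrt_mul_walk_envC_zero (hT : Ergodic T μ) (hTsymm : Measurable T.symm)
    (hc : Measurable c) (hcpos : ∀ ω, 0 < c ω) (hresistance : Integrable (fun ω => 1 / c ω) μ)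
    (hvolume : ∫⁻ ω, ENNReal.ofReal (c (T.symm ω) + c ω) ∂μ = ⊤) :
    ∀ᵐ ω ∂μ, Tendsto (fun n : ℕ => Real.sqrt (2 * n) * walk (envC T c ω) (2 * n) 0 0)
      atTop (nhds 0) := by
  filter_upwards [ae_tendsto_birkhoffAverage hT hresistance,
    ae_tendsto_birkhoffAverage_atTop hT ((hc.comp hTsymm).add hc)
      (fun ω => (add_pos (hcpos _) (hcpos ω)).le) hvolume] with ω hres hvol
  refine tendsto_sqrt_mul_walk_zero (fun _ => hcpos _) ?_ ?_
  · exact hvol.congr fun N => (sum_cbar_envC_div T c ω N).symm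
  · simpa only [sum_one_div_envC_div] using hres.isBoundedUnder_le

lemma ae_bounded_volume_and_tendsto_rightPotential_envC (hT : Ergodic T μ)
    (hc : Measurable c) (hcpos : ∀ ω, 0 < c ω)
    (hvolume : Integrable (fun ω => c (T.symm ω) + c ω) μ)
    (hresistance : ∫⁻ ω, ENNReal.ofReal (1 / c ω) ∂μ = ⊤) :
    ∀ᵐ ω ∂μ, IsBoundedUnder (· ≤ ·) atTop
        (fun N : ℕ => (∑ i ∈ Finset.range N, cbar (envC T c ω) i) / N) ∧
      Tendsto (fun N : ℕ => rightPotential (envC T c ω) (2 * N : ℕ) / (N : ℝ) ^ 2)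
        atTop atTop := by
  have hcbar (ω : Ω) : 0 < c (T.symm ω) + c ω := add_pos (hcpos _) (hcpos ω)
  have mean_pos : 0 < ∫ ω, c (T.symm ω) + c ω ∂μ := by
    rw [integral_pos_iff_support_of_nonneg (fun ω => (hcbar ω).le) hvolume,
      Function.support_eq_univ fun ω => (hcbar ω).ne', measure_univ]
    exact one_pos
  filter_upwards [ae_tendsto_birkhoffAverage hT hvolume,
    ae_tendsto_birkhoffAverage_iterate_atTop hT (measurable_const.div hc)
      (fun ω => (one_div_pos.2 (hcpos ω)).le) hresistance] with ω hvol hres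
  replace hvol := hvol.congr fun N => (sum_cbar_envC_div T c ω N).symm
  replace hres := hres.congr fun N => (sum_one_div_envC_add_div T c ω N).symm
  exact ⟨hvol.isBoundedUnder_le,
    tendsto_rightPotential_div_sq_atTop (fun _ => hcpos _) mean_pos hvol hres⟩

theorem ae_tendsto_sqrt_mul_walk_envC_atTop (hT : Ergodic T μ)
    (hTsymm : MeasurePreserving T.symm μ μ) (hc : Measurable c) (hcpos : ∀ ω, 0 < c ω)
    (hvolume : Integrable (fun ω => c (T.symm ω) + c ω) μ)
    (hresistance : ∫⁻ ω, ENNReal.ofReal (1 / c ω) ∂μ = ⊤) :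
    ∀ᵐ ω ∂μ, Tendsto (fun n : ℕ => Real.sqrt (2 * n) * walk (envC T c ω) (2 * n) 0 0)
      atTop atTop := by
  have ergodic_symm : Ergodic T.symm μ :=
    Ergodic.symm (e := ⟨T, hT.measurable, hTsymm.measurable⟩) hT
  have volume_symm : Integrable (fun ω => c (T.symm.symm ω) + c ω) μ := by
    simpa [Function.comp_def, add_comm] using
      hT.toMeasurePreserving.integrable_comp_of_integrable hvolume
  have right := ae_bounded_volume_and_tendsto_rightPotential_envC hT hc hcpos hvolume hresistance
  have left := hTsymm.quasiMeasurePreserving.ae <|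
    ae_bounded_volume_and_tendsto_rightPotential_envC ergodic_symm hc hcpos volume_symm hresistance
  filter_upwards [right, left] with ω ⟨hvol, hpot⟩ hleft
  rw [← reflect_envC] at hleft
  exact tendsto_sqrt_mul_walk_atTop (fun _ => hcpos _) hvol hleft.1 hpot hleft.2

end Ergodic

/-- Degenerate local limit theorem: if `1/c` is integrable but `∫c̄ dμ = ∞` then
`√(2n)·P_0^ω[S_{2n}=0] → 0` a.s.; if `c̄` is integrable but `∫(1/c)dμ = ∞` then
`√(2n)·P_0^ω[S_{2n}=0] → +∞` a.s. -/
theorem degenerate_local_limit_theorem {Ω : Type*} [MeasurableSpace Ω]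
    (μ : Measure Ω) [IsProbabilityMeasure μ]
    (T : Equiv.Perm Ω) (hT : Ergodic T μ)
    (hTsymm : MeasurePreserving T.symm μ μ)
    (c : Ω → ℝ) (hc : Measurable c) (hcpos : ∀ ω, 0 < c ω) :
    ((Integrable (fun ω => 1 / c ω) μ) →
      (∫⁻ ω, ENNReal.ofReal (c (T.symm ω) + c ω) ∂μ = ⊤) →
        ∀ᵐ ω ∂μ,
          Tendsto (fun n : ℕ => Real.sqrt (2 * n) * walk (envC T c ω) (2 * n) 0 0)
            atTop (nhds 0))
    ∧ ((Integrable (fun ω => c (T.symm ω) + c ω) μ) →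
      (∫⁻ ω, ENNReal.ofReal (1 / c ω) ∂μ = ⊤) →
        ∀ᵐ ω ∂μ,
          Tendsto (fun n : ℕ => Real.sqrt (2 * n) * walk (envC T c ω) (2 * n) 0 0)
            atTop atTop) := by
  exact ⟨ae_tendsto_sqrt_mul_walk_envC_zero hT hTsymm.measurable hc hcpos,
    ae_tendsto_sqrt_mul_walk_envC_atTop hT hTsymm hc hcpos⟩
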